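/- Let A : Fin d → Matrix (Fin D) (Fin D) ℂ be an injective MPS tensor, i.e., the linear map X ↦ (Tr(X · A^i))_{i=1}^d from Matrix (Fin D) (Fin D) ℂ to ℂ^d is injective. Then the linear map Q ↦ E_Q := ∑_{i,j=1}^{d} Q_{ij} · conj(A^i) ⊗ A^j, from Matrix (Fin d) (Fin d) ℂ to Matrix (Fin D × Fin D) (Fin D × Fin D) ℂ, is surjective: every D²×D² complex matrix arises as E_Q for some d×d matrix Q. In particular, for any vectors a, b ∈ ℂ^{D²} there is a d×d matrix O with E_O = a·bᴴ. -/

import Mathlib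

open Matrix Kronecker

/-- The generalized transfer matrix `E_Q = ∑ i j, Q i j • (conj (A i) ⊗ₖ A j)` of an MPS tensor
with respect to a single-site operator `Q`. -/
noncomputable def genTransferMatrix {d D : ℕ} (A : Fin d → Matrix (Fin D) (Fin D) ℂ)
    (Q : Matrix (Fin d) (Fin d) ℂ) : Matrix (Fin D × Fin D) (Fin D × Fin D) ℂ :=
  ∑ i, ∑ j, Q i j • ((A i).map (starRingEnd ℂ) ⊗ₖ A j)

theorem aux_coeff {d D : ℕ} (A : Fin d → Matrix (Fin D) (Fin D) ℂ)
    (hinj : Function.Injective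
      (fun X : Matrix (Fin D) (Fin D) ℂ => (fun i => (X * A i).trace : Fin d → ℂ)))
    (l k : Fin D) : ∃ c : Fin d → ℂ, ∀ x y,
      ∑ i, c i * A i x y = if l = x ∧ k = y then 1 else 0 := by
  let f : Matrix (Fin D) (Fin D) ℂ →ₗ[ℂ] (Fin d → ℂ) :=
    { toFun := fun X i => (X * A i).trace
      map_add' := by intro X Y; ext i; simp [Matrix.add_mul]
      map_smul' := by intro r X; ext i; simp }
  obtain ⟨g, hg⟩ := f.exists_leftInverse_of_injective (LinearMap.ker_eq_bot.mpr hinj)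
  refine ⟨fun i => g (Pi.single i 1) k l, fun x y => ?_⟩
  have h1 : g (f (Matrix.single y x 1)) = Matrix.single y x 1 := LinearMap.congr_fun hg _
  have h2 : f (Matrix.single y x 1) = ∑ i, A i x y • (Pi.single i 1 : Fin d → ℂ) := by
    ext j
    simp [f, Matrix.trace_single_mul, Finset.sum_apply, Pi.single_apply]
  rw [h2, map_sum] at h1
  have h3 := congrFun (congrFun h1 k) l
  simp only [map_smul, Matrix.sum_apply, Matrix.smul_apply, smul_eq_mul, Matrix.single_apply] at h3
  rw [Finset.sum_congr rfl (fun i _ => mul_comm _ _), h3]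
  congr 1
  apply propext
  constructor <;> rintro ⟨rfl, rfl⟩ <;> exact ⟨rfl, rfl⟩

theorem aux_surj {d D : ℕ} (A : Fin d → Matrix (Fin D) (Fin D) ℂ)
    (hinj : Function.Injective
      (fun X : Matrix (Fin D) (Fin D) ℂ => (fun i => (X * A i).trace : Fin d → ℂ))) :
    Function.Surjective (fun Q : Matrix (Fin d) (Fin d) ℂ => genTransferMatrix A Q) := by
  choose c hc using aux_coeff A hinj
  let E : Matrix (Fin d) (Fin d) ℂ →ₗ[ℂ] Matrix (Fin D × Fin D) (Fin D × Fin D) ℂ :=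
    { toFun := genTransferMatrix A
      map_add' := by
        intro X Y; simp [genTransferMatrix, add_smul, Finset.sum_add_distrib]
      map_smul' := by
        intro r X; simp [genTransferMatrix, Finset.smul_sum, mul_smul] }
  have hE : ∀ p q : Fin D × Fin D, E (Matrix.of fun i j => (starRingEnd ℂ) (c p.1 q.1 i) * c p.2 q.2 j)
      = Matrix.single p q 1 := by
    rintro ⟨p, p'⟩ ⟨q, q'⟩
    ext ⟨x, x'⟩ ⟨y, y'⟩
    have h1 := congrArg (starRingEnd ℂ) (hc p q x y)
    have h2 := hc p' q' x' y'
    rw [map_sum] at h1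
    have h3 := congrArg₂ (· * ·) h1 h2
    simp only [Finset.sum_mul_sum] at h3
    have h4 : E (Matrix.of fun i j => (starRingEnd ℂ) (c p q i) * c p' q' j) (x, x') (y, y') =
      ∑ i, ∑ j, (starRingEnd ℂ) (c p q i * A i x y) * (c p' q' j * A j x' y') := by
      change genTransferMatrix A _ _ _ = _
      simp only [Matrix.of_apply, genTransferMatrix, Matrix.sum_apply,
        Matrix.smul_apply, Matrix.kroneckerMap_apply, Matrix.map_apply, smul_eq_mul, map_mul]
      refine Finset.sum_congr rfl fun i _ => Finset.sum_congr rfl fun j _ => ?_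
      ring
    rw [h4, h3, Matrix.single_apply]
    by_cases e1 : p = x <;> by_cases e2 : q = y <;> by_cases e3 : p' = x' <;>
      by_cases e4 : q' = y' <;> simp [e1, e2, e3, e4]
  intro M
  have : M ∈ LinearMap.range E := by
    rw [Matrix.matrix_eq_sum_single M]
    refine Submodule.sum_mem _ fun p _ => Submodule.sum_mem _ fun q _ => ?_
    refine ⟨M p q • (Matrix.of fun i j => (starRingEnd ℂ) (c p.1 q.1 i) * c p.2 q.2 j), ?_⟩
    rw [map_smul, hE]
    simp
  exact this

/-- for an injective MPS tensor `A`, the map `Q ↦ E_Q` from `d×d` matrices to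
`D²×D²` matrices is surjective; in particular every rank-one matrix `a bᴴ` is of the form
`E_O` for some single-site operator `O`. -/
theorem genTransferMatrix_surjective_of_injective {d D : ℕ}
    (A : Fin d → Matrix (Fin D) (Fin D) ℂ)
    (hinj : Function.Injective
      (fun X : Matrix (Fin D) (Fin D) ℂ => (fun i => (X * A i).trace : Fin d → ℂ))) :
    Function.Surjective (fun Q : Matrix (Fin d) (Fin d) ℂ => genTransferMatrix A Q) ∧
    ∀ a b : Fin D × Fin D → ℂ, ∃ O : Matrix (Fin d) (Fin d) ℂ,
      genTransferMatrix A O = Matrix.vecMulVec a (fun β => (starRingEnd ℂ) (b β)) := by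
  exact ⟨aux_surj A hinj, fun a b => aux_surj A hinj _⟩
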